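/- Let Γ = (V,E) be a simple finite connected graph, q : V → ℝ a potential, and H(Γ) = Q − C the discrete Schrödinger operator, where Q = diag(q) and C is the adjacency matrix of Γ. Let β = |E| − |V| + 1, fix a spanning tree of Γ, and let S = {e_1, …, e_β} be the edges not in the tree, with e_j = (u_j, v_j), u_j < v_j. For α = (α_1,…,α_β) ∈ ℝ^β let H(Γ^α_mag) be the Hermitian matrix with diagonal entries q_u, entries −1 at positions (u,v),(v,u) for edges (u,v) ∈ E∖S, entries −e^{iα_j} at (u_j,v_j) and −e^{−iα_j} at (v_j,u_j) for e_j ∈ S, and 0 elsewhere. Suppose λ_n(H(Γ)) is a simple eigenvalue whose eigenvector is nonzero at every vertex. Then the function α ↦ λ_n(H(Γ^α_mag)) is differentiable in a neighborhood of α = 0 and α = 0 is a critical point of it: all its partial derivatives ∂λ_n/∂α_j vanish at 0. -/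

import Mathlib

open Matrix

/-- The eigenvalues of a Hermitian matrix, sorted in increasing order and counted with
multiplicity (junk value `0` if the matrix is not Hermitian); `sE M i` is the `i`-th sorted
eigenvalue, 0-based, with junk value `0` out of range. -/
noncomputable def sortedEigs {𝕜 : Type*} [RCLike 𝕜] {d : ℕ} (M : Matrix (Fin d) (Fin d) 𝕜) :
    Fin d → ℝ :=
  if h : M.IsHermitian then h.eigenvalues ∘ Tuple.sort h.eigenvalues else 0

noncomputable def sE {𝕜 : Type*} [RCLike 𝕜] {d : ℕ} (M : Matrix (Fin d) (Fin d) 𝕜)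
    (i : ℕ) : ℝ :=
  if h : i < d then sortedEigs M ⟨i, h⟩ else 0

/-- The discrete Schrödinger operator `H(Γ) = Q - C` of a graph `G` with potential `q`. -/
noncomputable def schrodOp {N : ℕ} (G : SimpleGraph (Fin N)) [DecidableRel G.Adj]
    (q : Fin N → ℝ) : Matrix (Fin N) (Fin N) ℝ :=
  Matrix.diagonal q - G.adjMatrix ℝ

/-- The cut operator `H(Γ^cut_γ)`: for each `j`, the matrix entries at `(uE j, vE j)` and
`(vE j, uE j)` (equal to `-1` in `H(Γ)`) are replaced by `0` and the diagonal entries at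
`uE j`, `vE j` are decreased by `γ j` and `(γ j)⁻¹` respectively. -/
noncomputable def schrodCut {N β : ℕ} (G : SimpleGraph (Fin N)) [DecidableRel G.Adj]
    (q : Fin N → ℝ) (uE vE : Fin β → Fin N) (γ : Fin β → ℝ) :
    Matrix (Fin N) (Fin N) ℝ :=
  schrodOp G q - ∑ j : Fin β, Matrix.of (fun a b =>
    if a = uE j ∧ b = uE j then γ j
    else if a = vE j ∧ b = vE j then (γ j)⁻¹
    else if (a = uE j ∧ b = vE j) ∨ (a = vE j ∧ b = uE j) then -1
    else 0)

/-- The magnetic operator `H(Γ^α_mag)`: the entries of `H(Γ)` at `(uE j, vE j)` and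
`(vE j, uE j)` (equal to `-1`) are replaced by `-exp(i α j)` and `-exp(-i α j)`. -/
noncomputable def schrodMag {N β : ℕ} (G : SimpleGraph (Fin N)) [DecidableRel G.Adj]
    (q : Fin N → ℝ) (uE vE : Fin β → Fin N) (α : Fin β → ℝ) :
    Matrix (Fin N) (Fin N) ℂ :=
  (schrodOp G q).map (fun x => (x : ℂ)) + ∑ j : Fin β, Matrix.of (fun a b =>
    if a = uE j ∧ b = vE j then 1 - Complex.exp (Complex.I * (α j : ℝ))
    else if a = vE j ∧ b = uE j then 1 - Complex.exp (-(Complex.I * (α j : ℝ)))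
    else 0)

/-- The number of sign changes ("zeros") of a vertex function `f`: the number of edges of `G`
at whose endpoints `f` has different signs. -/
noncomputable def signChanges {N : ℕ} (G : SimpleGraph (Fin N)) (f : Fin N → ℝ) : ℕ :=
  {e : Sym2 (Fin N) | e ∈ G.edgeSet ∧ ∀ u v : Fin N, e = s(u, v) → f u * f v < 0}.ncard

open Polynomial in
theorem aux_charpoly {𝕜 : Type*} [RCLike 𝕜] {d : ℕ} {M : Matrix (Fin d) (Fin d) 𝕜}
    (h : M.IsHermitian) : M.charpoly = ∏ i, (X - C ((sortedEigs M i : ℝ) : 𝕜)) := by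
  rw [h.charpoly_eq, sortedEigs, dif_pos h]
  exact (Equiv.prod_comp (Tuple.sort h.eigenvalues)
    (fun i => (X - C ((h.eigenvalues i : ℝ) : 𝕜)))).symm

theorem aux_mono {𝕜 : Type*} [RCLike 𝕜] {d : ℕ} (M : Matrix (Fin d) (Fin d) 𝕜) :
    Monotone (sortedEigs M) := by
  unfold sortedEigs
  split_ifs with h
  · exact Tuple.monotone_sort _
  · exact monotone_const

theorem aux_det {𝕜 : Type*} [RCLike 𝕜] {d : ℕ} {M : Matrix (Fin d) (Fin d) 𝕜}
    (h : M.IsHermitian) (x : ℝ) :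
    (Matrix.scalar (Fin d) (x : 𝕜) - M).det = ((∏ i, (x - sortedEigs M i) : ℝ) : 𝕜) := by
  rw [← Matrix.eval_charpoly, aux_charpoly h, Polynomial.eval_prod]
  simp

open Polynomial in
theorem aux_unique {d : ℕ} {a b : Fin d → ℝ} (ha : Monotone a) (hb : Monotone b)
    (h : ∀ x : ℝ, ∏ i, (x - a i) = ∏ i, (x - b i)) : a = b := by
  have h1 : (∏ i, (X - C (a i))) = ∏ i, (X - C (b i)) := by
    apply Polynomial.funext
    intro x
    simpa [Polynomial.eval_prod] using h x
  have h2 := congrArg Polynomial.roots h1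
  have e : ∀ c : Fin d → ℝ, (∏ i, (X - C (c i))).roots = (List.ofFn c : Multiset ℝ) := by
    intro c
    have := Polynomial.roots_multiset_prod_X_sub_C (Finset.univ.val.map c)
    rw [Multiset.map_map] at this
    rw [← Fin.univ_val_map]
    exact this
  rw [e, e, Multiset.coe_eq_coe] at h2
  exact List.ofFn_injective
    (h2.eq_of_pairwise' ha.sortedLE_ofFn.pairwise hb.sortedLE_ofFn.pairwise)

theorem aux_bound {𝕜 : Type*} [RCLike 𝕜] {d : ℕ} {M : Matrix (Fin d) (Fin d) 𝕜}
    (h : M.IsHermitian) (i : Fin d) : ‖sortedEigs M i‖ ≤ ∑ k, ∑ j, ‖M k j‖ := by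
  rw [sortedEigs, dif_pos h]
  set l := (h.eigenvalues ∘ Tuple.sort h.eigenvalues) i with hl
  have he : Module.End.HasEigenvalue (Matrix.toLin' M) (l : 𝕜) := by
    apply Module.End.hasEigenvalue_of_hasEigenvector
      (x := ⇑(h.eigenvectorBasis (Tuple.sort h.eigenvalues i)))
    refine ⟨?_, ?_⟩
    · rw [Module.End.mem_eigenspace_iff, Matrix.toLin'_apply, h.mulVec_eigenvectorBasis]
      ext j
      simp [hl, RCLike.real_smul_eq_coe_mul]
    · intro h0
      have := h.eigenvectorBasis.orthonormal.ne_zero (Tuple.sort h.eigenvalues i)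
      apply this
      ext j
      exact congrFun h0 j
  obtain ⟨k, hk⟩ := eigenvalue_mem_ball he
  rw [mem_closedBall_iff_norm] at hk
  have h1 : ‖(l : 𝕜)‖ ≤ ‖M k k‖ + ∑ j ∈ Finset.univ.erase k, ‖M k j‖ := by
    have := norm_add_le ((l : 𝕜) - M k k) (M k k)
    rw [sub_add_cancel] at this
    linarith
  rw [Finset.add_sum_erase _ (fun j => ‖M k j‖) (Finset.mem_univ k)] at h1
  have h2 := Finset.single_le_sum (f := fun k => ∑ j, ‖M k j‖)
    (fun i _ => Finset.sum_nonneg (fun j _ => norm_nonneg (M i j))) (Finset.mem_univ k)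
  rw [RCLike.norm_ofReal] at h1
  exact h1.trans h2

open Filter Topology in
theorem aux_cont {T : Type*} [TopologicalSpace T] {d : ℕ} {M : T → Matrix (Fin d) (Fin d) ℂ}
    (h : ∀ t, (M t).IsHermitian) (hM : Continuous M) :
    Continuous (fun t => sortedEigs (M t)) := by
  rw [continuous_iff_ultrafilter]
  intro x g hg
  set f := fun t => sortedEigs (M t) with hf
  set B : T → ℝ := fun t => ∑ k, ∑ j, ‖M t k j‖ with hB
  have hBc : Continuous B := by
    apply continuous_finsetSum; intro k _
    apply continuous_finsetSum; intro j _
    exact (hM.matrix_elem k j).norm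
  have hb : ∀ᶠ t in (g : Filter T), f t ∈ Metric.closedBall (0 : Fin d → ℝ) (B x + 1) := by
    have h1 : ∀ᶠ t in 𝓝 x, B t < B x + 1 :=
      hBc.continuousAt.eventually_lt continuousAt_const (by linarith)
    filter_upwards [hg h1] with t ht
    rw [mem_closedBall_zero_iff, pi_norm_le_iff_of_nonneg]
    · intro i
      exact (aux_bound (h t) i).trans ht.le
    · have : 0 ≤ B x := Finset.sum_nonneg fun i _ => Finset.sum_nonneg fun j _ => norm_nonneg _
      linarith
  obtain ⟨a, -, ha⟩ := (isCompact_closedBall (0 : Fin d → ℝ) (B x + 1)).ultrafilter_le_nhds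
    (g.map f) (by rw [le_principal_iff]; exact hb)
  have ha' : Tendsto f g (𝓝 a) := ha
  have hmono : Monotone a := by
    intro i j hij
    exact le_of_tendsto_of_tendsto' ((continuous_apply i).continuousAt.tendsto.comp ha')
      ((continuous_apply j).continuousAt.tendsto.comp ha') (fun t => aux_mono (M t) hij)
  have : a = f x := by
    apply aux_unique hmono (aux_mono _)
    intro y
    have t1 : Tendsto (fun t => ∏ i, (y - f t i)) g (𝓝 (∏ i, (y - a i))) := by
      have : Continuous fun v : Fin d → ℝ => ∏ i, (y - v i) := by fun_prop
      exact (this.continuousAt.tendsto).comp ha'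
    have e : (fun t => ∏ i, (y - f t i)) =
        fun t => ((Matrix.scalar (Fin d) (y : ℂ) - M t).det).re := by
      ext t
      have := aux_det (h t) y
      simp only [RCLike.ofReal_eq_complex_ofReal] at this
      rw [this, Complex.ofReal_re]
    have t2 : Tendsto (fun t => ∏ i, (y - f t i)) g (𝓝 (∏ i, (y - f x i))) := by
      have hc : Continuous (fun t => ∏ i, (y - f t i)) := by
        rw [e]
        exact Complex.continuous_re.comp ((continuous_const.sub hM).matrix_det)
      exact hc.continuousAt.tendsto.mono_left hg
    exact tendsto_nhds_unique t1 t2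
  rw [this] at ha'
  exact ha'

theorem aux_simple {d : ℕ} {A : Matrix (Fin d) (Fin d) ℝ} (h : A.IsHermitian) (i : Fin d)
    (hs : Module.finrank ℝ (Module.End.eigenspace (Matrix.toLin' A) (sortedEigs A i)) = 1)
    (j : Fin d) (hj : j ≠ i) : sortedEigs A i ≠ sortedEigs A j := by
  intro hij
  set s := Tuple.sort h.eigenvalues with hs'
  have hm : ∀ k, sortedEigs A k = sortedEigs A i →
      (⇑(h.eigenvectorBasis (s k)) : Fin d → ℝ) ∈
        Module.End.eigenspace (Matrix.toLin' A) (sortedEigs A i) := by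
    intro k hk
    rw [Module.End.mem_eigenspace_iff, Matrix.toLin'_apply, h.mulVec_eigenvectorBasis, ← hk,
      sortedEigs, dif_pos h]
    rfl
  obtain ⟨v, -, hv⟩ := finrank_eq_one_iff'.mp hs
  obtain ⟨c, hc⟩ := hv ⟨_, hm i rfl⟩
  obtain ⟨c', hc'⟩ := hv ⟨_, hm j hij.symm⟩
  have o := h.eigenvectorBasis.orthonormal
  have hne : s j ≠ s i := fun hh => hj (s.injective hh)
  have key : c' • h.eigenvectorBasis (s i) = c • h.eigenvectorBasis (s j) := by
    ext k
    have e1 := congrFun (congrArg Subtype.val hc) k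
    have e2 := congrFun (congrArg Subtype.val hc') k
    simp at e1 e2 ⊢
    rw [← e1, ← e2]; ring
  have h1 := congrArg (fun w => inner ℝ (h.eigenvectorBasis (s i)) w) key
  simp [inner_smul_right, o.2 hne.symm, o.1] at h1
  rw [h1] at hc'
  have := o.ne_zero (s j)
  apply this
  ext k
  have e2 := congrFun (congrArg Subtype.val hc') k
  simpa using e2.symm

theorem aux_op_symm {N : ℕ} (G : SimpleGraph (Fin N)) [DecidableRel G.Adj]
    (q : Fin N → ℝ) (a b : Fin N) : schrodOp G q a b = schrodOp G q b a := by
  have : (schrodOp G q)ᵀ = schrodOp G q := by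
    simp [schrodOp, Matrix.transpose_sub]
  exact congrFun (congrFun this b) a |>.symm ▸ rfl

theorem aux_op_herm {N : ℕ} (G : SimpleGraph (Fin N)) [DecidableRel G.Adj]
    (q : Fin N → ℝ) : (schrodOp G q).IsHermitian := by
  ext a b
  simpa using aux_op_symm G q b a

theorem aux_mag_apply {N β : ℕ} (G : SimpleGraph (Fin N)) [DecidableRel G.Adj]
    (q : Fin N → ℝ) (uE vE : Fin β → Fin N) (α : Fin β → ℝ) (a b : Fin N) :
    schrodMag G q uE vE α a b = (schrodOp G q a b : ℂ) + ∑ j : Fin β,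
    (if a = uE j ∧ b = vE j then 1 - Complex.exp (Complex.I * (α j : ℝ))
    else if a = vE j ∧ b = uE j then 1 - Complex.exp (-(Complex.I * (α j : ℝ)))
    else 0) := by
  simp [schrodMag, Matrix.sum_apply]

theorem aux_mag_neg {N β : ℕ} (G : SimpleGraph (Fin N)) [DecidableRel G.Adj]
    (q : Fin N → ℝ) (uE vE : Fin β → Fin N) (horder : ∀ j, uE j < vE j) (α : Fin β → ℝ) :
    schrodMag G q uE vE (-α) = (schrodMag G q uE vE α)ᵀ := by
  ext a b
  rw [Matrix.transpose_apply, aux_mag_apply, aux_mag_apply, aux_op_symm G q a b]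
  congr 1
  apply Finset.sum_congr rfl
  intro j _
  have := (horder j).ne
  split_ifs with h1 h2 h3 h4 <;> simp_all

theorem aux_mag_herm {N β : ℕ} (G : SimpleGraph (Fin N)) [DecidableRel G.Adj]
    (q : Fin N → ℝ) (uE vE : Fin β → Fin N) (horder : ∀ j, uE j < vE j) (α : Fin β → ℝ) :
    (schrodMag G q uE vE α).IsHermitian := by
  ext a b
  rw [Matrix.conjTranspose_apply, aux_mag_apply, aux_mag_apply, aux_op_symm G q a b, star_add,
    star_sum]
  congr 1
  · simp
  apply Finset.sum_congr rfl
  intro j _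
  have := (horder j).ne
  split_ifs with h1 h2 h3 h4 <;> simp_all [← Complex.exp_conj]

theorem aux_mag_zero {N β : ℕ} (G : SimpleGraph (Fin N)) [DecidableRel G.Adj]
    (q : Fin N → ℝ) (uE vE : Fin β → Fin N) :
    schrodMag G q uE vE 0 = (schrodOp G q).map (algebraMap ℝ ℂ) := by
  ext a b
  rw [aux_mag_apply]
  simp

theorem aux_mag_smooth {N β : ℕ} (G : SimpleGraph (Fin N)) [DecidableRel G.Adj]
    (q : Fin N → ℝ) (uE vE : Fin β → Fin N) (a b : Fin N) :
    ContDiff ℝ 1 (fun α : Fin β → ℝ => schrodMag G q uE vE α a b) := by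
  simp_rw [aux_mag_apply]
  apply contDiff_const.add
  apply ContDiff.sum
  intro j _
  have h : ContDiff ℝ 1 (fun α : Fin β → ℝ => ((α j : ℝ) : ℂ)) :=
    Complex.ofRealCLM.contDiff.comp (contDiff_apply ℝ ℝ j)
  split_ifs
  · exact contDiff_const.sub (contDiff_const.mul h).cexp
  · exact contDiff_const.sub (contDiff_const.mul h).neg.cexp
  · exact contDiff_const

theorem aux_det_smooth {E : Type*} [NormedAddCommGroup E] [NormedSpace ℝ E] {d : ℕ}
    {M : E → Matrix (Fin d) (Fin d) ℂ} (h : ∀ a b, ContDiff ℝ 1 (fun x => M x a b)) :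
    ContDiff ℝ 1 (fun x => (M x).det) := by
  simp_rw [Matrix.det_apply]
  apply ContDiff.sum
  intro s _
  apply ContDiff.const_smul
  apply contDiff_prod
  intro i _
  exact h _ _

theorem aux_eigs_zero {d : ℕ} {A : Matrix (Fin d) (Fin d) ℝ} (hA : A.IsHermitian)
    (hM : (A.map (algebraMap ℝ ℂ)).IsHermitian) :
    sortedEigs (A.map (algebraMap ℝ ℂ)) = sortedEigs A := by
  apply aux_unique (aux_mono _) (aux_mono _)
  intro x
  have h1 := aux_det hM x
  have h2 := aux_det hA x
  have h3 : Matrix.scalar (Fin d) ((x : ℝ) : ℂ) - A.map (algebraMap ℝ ℂ)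
      = (algebraMap ℝ ℂ).mapMatrix (Matrix.scalar (Fin d) x - A) := by
    ext a b
    by_cases hab : a = b <;> simp [hab]
  simp only [RCLike.ofReal_real_eq_id, id] at h2
  change (Matrix.scalar (Fin d) ((x : ℝ) : ℂ) - A.map (algebraMap ℝ ℂ)).det = _ at h1
  rw [h3, ← RingHom.map_det, h2] at h1
  exact (Complex.ofReal_injective h1).symm

open Filter Topology in
/-- A continuous branch of simple roots is differentiable. -/
theorem aux_ift {E : Type*} [NormedAddCommGroup E] [NormedSpace ℝ E] [CompleteSpace E]
    {F : E × ℝ → ℝ} (hF : ContDiff ℝ 1 F) {g : E → ℝ} (hg : Continuous g)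
    (h0 : ∀ x, F (x, g x) = 0) (x : E) {c : ℝ} (hc : c ≠ 0)
    (hd : HasDerivAt (fun y => F (x, y)) c (g x)) : DifferentiableAt ℝ g x := by
  have hs : HasStrictFDerivAt F (fderiv ℝ F (x, g x)) (x, g x) :=
    hF.contDiffAt.hasStrictFDerivAt (by norm_num)
  have hc' : fderiv ℝ F (x, g x) (0, 1) = c := by
    have h1 : HasDerivAt (fun y : ℝ => ((x, y) : E × ℝ)) (0, 1) (g x) :=
      (hasDerivAt_const _ _).prodMk (hasDerivAt_id _)
    exact (hs.hasFDerivAt.comp_hasDerivAt (g x) h1).unique hd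
  have hi : (fderiv ℝ F (x, g x) ∘L .inr ℝ E ℝ).IsInvertible := by
    refine ⟨ContinuousLinearEquiv.unitsEquivAut ℝ (Units.mk0 c hc), ?_⟩
    ext
    simp [hc']
  have ht : Tendsto (fun y => (y, g y)) (𝓝 x) (𝓝 (x, g x)) :=
    (continuous_id.prodMk hg).continuousAt
  have hev := ht.eventually (hs.eventually_apply_eq_iff_implicitFunctionOfProdDomain hi)
  have hψ := (hs.hasStrictFDerivAt_implicitFunctionOfProdDomain hi).hasFDerivAt.differentiableAt
  refine hψ.congr_of_eventuallyEq ?_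
  filter_upwards [hev] with y hy
  exact (hy.mp (by rw [h0, h0])).symm

theorem aux_prod_deriv {d : ℕ} (e : Fin d → ℝ) (i : Fin d) :
    HasDerivAt (fun y => ∏ k, (y - e k)) (∏ k ∈ Finset.univ.erase i, (e i - e k)) (e i) := by
  have h1 : (fun y => ∏ k, (y - e k)) =
      fun y => (y - e i) * ∏ k ∈ Finset.univ.erase i, (y - e k) := by
    ext y
    exact (Finset.mul_prod_erase _ _ (Finset.mem_univ i)).symm
  rw [h1]
  have h2 : DifferentiableAt ℝ (fun y => ∏ k ∈ Finset.univ.erase i, (y - e k)) (e i) := by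
    fun_prop
  have h3 := ((hasDerivAt_id (e i)).sub_const (e i)).mul h2.hasDerivAt
  have h4 : (1 : ℝ) * (∏ k ∈ Finset.univ.erase i, (e i - e k)) +
      (e i - e i) * deriv (fun y => ∏ k ∈ Finset.univ.erase i, (y - e k)) (e i) =
      ∏ k ∈ Finset.univ.erase i, (e i - e k) := by ring
  rw [← h4]
  exact h3

/-- `α = 0` is a critical point of `α ↦ λ_n(H(Γ^α_mag))` (which is
differentiable in a neighborhood of `0`), provided `λ_n(H(Γ))` is simple with eigenvector
nonzero at every vertex. -/
theorem mag_eigenvalue_critical_point {N β : ℕ} (G : SimpleGraph (Fin N))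
    [DecidableRel G.Adj] (hconn : G.Connected) (q : Fin N → ℝ)
    (uE vE : Fin β → Fin N) (horder : ∀ j, uE j < vE j)
    (hadj : ∀ j, G.Adj (uE j) (vE j))
    (hdistinct : ∀ i j, s(uE i, vE i) = s(uE j, vE j) → i = j)
    (htree : (G.deleteEdges {e | ∃ j, e = s(uE j, vE j)}).IsTree)
    (hβ : β + N = G.edgeFinset.card + 1)
    (n : ℕ) (hn1 : 1 ≤ n) (hn2 : n ≤ N)
    (f : Fin N → ℝ)
    (heig : (schrodOp G q).mulVec f = sE (schrodOp G q) (n - 1) • f)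
    (hsimple : Module.finrank ℝ
      (Module.End.eigenspace (Matrix.toLin' (schrodOp G q)) (sE (schrodOp G q) (n - 1))) = 1)
    (hf0 : ∀ v, f v ≠ 0)
    (lamMag : (Fin β → ℝ) → ℝ)
    (hlamMag : lamMag = fun α => sE (schrodMag G q uE vE α) (n - 1)) :
    (∀ᶠ α in nhds (0 : Fin β → ℝ), DifferentiableAt ℝ lamMag α) ∧
    fderiv ℝ lamMag 0 = 0 := by
  have hN : n - 1 < N := by omega
  set i0 : Fin N := ⟨n - 1, hN⟩ with hi0
  set M : (Fin β → ℝ) → Matrix (Fin N) (Fin N) ℂ := fun α => schrodMag G q uE vE α with hMdef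
  have hH : ∀ α, (M α).IsHermitian := aux_mag_herm G q uE vE horder
  have hMs : ∀ a b, ContDiff ℝ 1 (fun α => M α a b) := aux_mag_smooth G q uE vE
  have hMc : Continuous M := continuous_matrix fun a b => (hMs a b).continuous
  have hec := aux_cont hH hMc
  have hlam : lamMag = fun α => sortedEigs (M α) i0 := by
    rw [hlamMag]; ext α; simp [sE, hN, hi0, hMdef]
  have hlc : Continuous lamMag := by
    rw [hlam]; exact (continuous_apply i0).comp hec
  have hop := aux_op_herm G q
  have hz : sortedEigs (M 0) = sortedEigs (schrodOp G q) := by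
    have h1 := hH 0
    have h2 : M 0 = (schrodOp G q).map (algebraMap ℝ ℂ) := aux_mag_zero G q uE vE
    rw [h2] at h1 ⊢
    exact aux_eigs_zero hop h1
  have hsE : sE (schrodOp G q) (n - 1) = sortedEigs (schrodOp G q) i0 := by
    simp [sE, hN, hi0]
  rw [hsE] at hsimple
  have hne0 := aux_simple hop i0 hsimple
  rw [← hz] at hne0
  -- simplicity persists near `0`
  have hev : ∀ᶠ α in nhds (0 : Fin β → ℝ), ∀ j, j ≠ i0 →
      sortedEigs (M α) i0 ≠ sortedEigs (M α) j := by
    rw [Filter.eventually_all]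
    intro j
    by_cases hj : j = i0
    · simp [hj]
    · have c1 : Continuous fun α => sortedEigs (M α) i0 := (continuous_apply i0).comp hec
      have c2 : Continuous fun α => sortedEigs (M α) j := (continuous_apply j).comp hec
      filter_upwards [(isOpen_ne_fun c1 c2).mem_nhds (hne0 j hj)] with α hα _
      exact hα
  set F : (Fin β → ℝ) × ℝ → ℝ :=
    fun p => ((Matrix.scalar (Fin N) (p.2 : ℂ) - M p.1).det).re with hFdef
  have hFe : ∀ α y, F (α, y) = ∏ k, (y - sortedEigs (M α) k) := by
    intro α y
    have := aux_det (hH α) y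
    simp only [RCLike.ofReal_eq_complex_ofReal] at this
    simp only [hFdef]
    rw [this, Complex.ofReal_re]
  have hF : ContDiff ℝ 1 F := by
    apply Complex.reCLM.contDiff.comp
    apply aux_det_smooth
    intro a b
    have h1 : ContDiff ℝ 1 (fun p : (Fin β → ℝ) × ℝ => M p.1 a b) := (hMs a b).comp contDiff_fst
    have h2 : ContDiff ℝ 1 (fun p : (Fin β → ℝ) × ℝ => (p.2 : ℂ)) :=
      Complex.ofRealCLM.contDiff.comp contDiff_snd
    by_cases hab : a = b
    · simpa [hab] using h2.sub (hab ▸ h1)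
    · simpa [hab] using h1.neg
  have hdiff : ∀ᶠ α in nhds (0 : Fin β → ℝ), DifferentiableAt ℝ lamMag α := by
    filter_upwards [hev] with α hα
    refine aux_ift hF hlc ?_ α
      (c := ∏ k ∈ Finset.univ.erase i0, (sortedEigs (M α) i0 - sortedEigs (M α) k)) ?_ ?_
    · intro x
      rw [hFe, hlam]
      exact Finset.prod_eq_zero (Finset.mem_univ i0) (sub_self _)
    · rw [Finset.prod_ne_zero_iff]
      intro k hk
      exact sub_ne_zero.mpr (hα k (Finset.ne_of_mem_erase hk))
    · simp_rw [hFe]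
      rw [hlam]
      exact aux_prod_deriv (sortedEigs (M α)) i0
  refine ⟨hdiff, ?_⟩
  have heven : ∀ α, lamMag (-α) = lamMag α := by
    intro α
    rw [hlam]
    refine congrFun (aux_unique (aux_mono _) (aux_mono _) ?_) i0
    intro y
    rw [← hFe, ← hFe]
    have h1 : M (-α) = (M α)ᵀ := aux_mag_neg G q uE vE horder α
    simp only [hFdef]
    rw [h1, ← Matrix.det_transpose]
    congr 2
    simp [Matrix.transpose_sub]
  have hd0 := hdiff.self_of_nhds.hasFDerivAt
  have hneg : HasFDerivAt (fun α : Fin β → ℝ => -α) (-ContinuousLinearMap.id ℝ (Fin β → ℝ)) 0 :=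
    (hasFDerivAt_id (0 : Fin β → ℝ)).neg
  have hd1 : HasFDerivAt (fun α => lamMag (-α))
      ((fderiv ℝ lamMag 0).comp (-ContinuousLinearMap.id ℝ (Fin β → ℝ))) 0 := by
    apply HasFDerivAt.comp (0 : Fin β → ℝ) _ hneg
    simpa using hd0
  simp_rw [heven] at hd1
  have huniq := hd1.unique hd0
  ext v
  have hv := congrArg (fun L : (Fin β → ℝ) →L[ℝ] ℝ => L v) huniq
  simp at hv
  simp only [_root_.zero_apply]
  linarith
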